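/- Let R = K[a,b,c,x,y,z] and I = (a^k b^k, b^m c^m, a^p x^p, b^q y^q, c^r z^r) with positive integers k < m and p, q, r. If R/I^n is Cohen-Macaulay for all n ≥ 1, then r ≥ m·(⌈m/(m−k)⌉ − 2). -/

import Mathlib

open MvPolynomial

/-- `R/I` is Cohen–Macaulay: there is a regular sequence on `R/I` contained in the
maximal ideal generated by the variables whose length equals the Krull dimension of `R/I`. -/
def IsCMQuot {K : Type*} [Field K] {σ : Type*} (I : Ideal (MvPolynomial σ K)) : Prop :=
  ∃ rs : List (MvPolynomial σ K),
    (∀ r ∈ rs, r ∈ Ideal.span (Set.range (X : σ → MvPolynomial σ K))) ∧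
    RingTheory.Sequence.IsRegular (MvPolynomial σ K ⧸ I) rs ∧
    (rs.length : WithBot (WithTop ℕ)) = ringKrullDim (MvPolynomial σ K ⧸ I)

/-!
A regular sequence of length `ℓ` on `M` contained in a prime `𝔪` forces `dim R/ann u ≥ ℓ` for
every `u : M` with `ann u ⊆ 𝔪`. Hence if `R/J` is Cohen–Macaulay, no colon ideal `J : f` of a
monomial `f ∉ J` has larger height than `J`.

The powers of the edge ideal have height at most `3`, as `{a, b, c}` is a vertex cover. So no
monomial outside `I^n` can be pushed into `I^n` by powers of each of four different variables.
With `t = ⌈m/(m-k)⌉`, the monomial `a^p b^{m(t-1)} c^{mt+r}` and the power `I^t` give `p ≥ kt`;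
once `p` is that large, `a^p b^{m(t-2)} c^r x^{p(t-1)}` and `I^(t-1)` give `r ≥ m(t-2)`.
-/

section RegularSequence

variable {R M : Type*} [CommRing R] [AddCommGroup M] [Module R M] {x : R}

theorem quotSMulTop_map_subtype_injective {N : Submodule R M} (hx : IsSMulRegular (M ⧸ N) x) :
    Function.Injective (QuotSMulTop.map x N.subtype) := by
  have exact_zero : Function.Exact (0 : N →ₗ[R] N) N.subtype :=
    (LinearMap.exact_zero_iff_injective _ _).2 N.subtype_injective
  have exact_map := QuotSMulTop.map_first_exact_on_four_term_exact_of_isSMulRegular_last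
    exact_zero (LinearMap.exact_subtype_mkQ N) hx
  rw [map_zero] at exact_map
  exact (LinearMap.exact_zero_iff_injective _ _).1 exact_map

theorem isSMulRegular_quotient_torsionBySet (hx : IsSMulRegular M x) (s : Set R) :
    IsSMulRegular (M ⧸ Submodule.torsionBySet R M s) x := by
  rw [isSMulRegular_quotient_iff_mem_of_smul_mem]
  intro v hv
  rw [Submodule.mem_torsionBySet_iff] at hv ⊢
  exact fun a ↦ hx.right_eq_zero_of_smul ((smul_comm x (a : R) v).trans (hv a))

theorem exists_torsionOf_le_torsionOf_quotSMulTop_le [IsNoetherianRing R] [Module.Finite R M]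
    (hx : IsSMulRegular M x) {𝔪 : Ideal R} [h𝔪 : 𝔪.IsPrime] (hxm : x ∈ 𝔪) {u : M}
    (hu : Ideal.torsionOf R M u ≤ 𝔪) :
    ∃ w : QuotSMulTop x M, Ideal.torsionOf R M u ≤ Ideal.torsionOf R _ w ∧
      Ideal.torsionOf R _ w ≤ 𝔪 := by
  -- Passing to the submodule killed by `ann u` keeps `ann u` inside every annihilator.
  let N := Submodule.torsionBySet R M (Ideal.torsionOf R M u)
  have u_mem : u ∈ N := (Submodule.mem_torsionBySet_iff _ _).2 fun a ↦ a.2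
  have mem_support : (⟨𝔪, h𝔪⟩ : PrimeSpectrum R) ∈ Module.support R (QuotSMulTop x N) := by
    rw [Module.support_quotSMulTop]
    refine ⟨Module.mem_support_iff_exists_annihilator.2 ⟨⟨u, u_mem⟩, ?_⟩, by simpa using hxm⟩
    refine le_trans (fun a ha ↦ ?_) hu
    rw [Submodule.mem_annihilator_span_singleton] at ha
    exact congrArg Subtype.val ha
  obtain ⟨w, hw⟩ := Module.mem_support_iff_exists_annihilator.1 mem_support
  refine ⟨QuotSMulTop.map x N.subtype w, fun a ha ↦ ?_, fun a ha ↦ hw ?_⟩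
  · obtain ⟨v, rfl⟩ := Submodule.Quotient.mk_surjective _ w
    have a_smul_v : a • v = 0 :=
      Subtype.ext ((Submodule.mem_torsionBySet_iff _ _).1 v.2 ⟨a, ha⟩)
    rw [Ideal.mem_torsionOf_iff, ← map_smul, ← Submodule.Quotient.mk_smul, a_smul_v,
      Submodule.Quotient.mk_zero, map_zero]
  · rw [Submodule.mem_annihilator_span_singleton]
    apply quotSMulTop_map_subtype_injective (isSMulRegular_quotient_torsionBySet hx _)
    rwa [map_smul, map_zero]

theorem ringKrullDim_quotient_add_one_le_of_torsionOf_le (hx : IsSMulRegular M x) {u : M}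
    {J : Ideal R} (huJ : Ideal.torsionOf R M u ≤ J) (hxJ : x ∈ J) :
    ringKrullDim (R ⧸ J) + 1 ≤ ringKrullDim (R ⧸ Ideal.torsionOf R M u) := by
  have x_nonZeroDivisor :
      Ideal.Quotient.mk (Ideal.torsionOf R M u) x ∈ nonZeroDivisors _ := by
    rw [mem_nonZeroDivisors_iff_right]
    intro y hy
    obtain ⟨a, rfl⟩ := Ideal.Quotient.mk_surjective y
    rw [← map_mul, Ideal.Quotient.eq_zero_iff_mem, Ideal.mem_torsionOf_iff] at hy
    rw [Ideal.Quotient.eq_zero_iff_mem, Ideal.mem_torsionOf_iff]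
    exact hx.right_eq_zero_of_smul (by rwa [smul_smul, mul_comm])
  exact ringKrullDim_succ_le_of_surjective (Ideal.Quotient.factor huJ)
    (Ideal.Quotient.factor_surjective huJ) x_nonZeroDivisor
    (Ideal.Quotient.eq_zero_iff_mem.2 hxJ)

theorem length_le_ringKrullDim_quotient_torsionOf [IsNoetherianRing R] {𝔪 : Ideal R} [𝔪.IsPrime]
    [Module.Finite R M] {rs : List R}
    (hrs : RingTheory.Sequence.IsWeaklyRegular M rs) (hrsm : ∀ r ∈ rs, r ∈ 𝔪) {u : M}
    (hu : Ideal.torsionOf R M u ≤ 𝔪) :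
    (rs.length : WithBot ℕ∞) ≤ ringKrullDim (R ⧸ Ideal.torsionOf R M u) := by
  induction rs generalizing M with
  | nil =>
    have : Nontrivial (R ⧸ Ideal.torsionOf R M u) :=
      Ideal.Quotient.nontrivial_iff.2 (ne_top_of_le_ne_top (Ideal.IsPrime.ne_top ‹_›) hu)
    simpa using ringKrullDim_nonneg_of_nontrivial
  | cons x rs ih =>
    obtain ⟨hx, hrs⟩ := (RingTheory.Sequence.isWeaklyRegular_cons_iff M x rs).1 hrs
    obtain ⟨hxm, hrsm⟩ := List.forall_mem_cons.1 hrsm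
    obtain ⟨w, huw, hwm⟩ := exists_torsionOf_le_torsionOf_quotSMulTop_le hx hxm hu
    have hxw : x ∈ Ideal.torsionOf R _ w :=
      Module.mem_annihilator.1 (QuotSMulTop.mem_annihilator M x) w
    calc ((x :: rs).length : WithBot ℕ∞) = rs.length + 1 := by simp
      _ ≤ ringKrullDim (R ⧸ Ideal.torsionOf R _ w) + 1 := by gcongr; exact ih hrs hrsm hwm
      _ ≤ ringKrullDim (R ⧸ Ideal.torsionOf R M u) :=
        ringKrullDim_quotient_add_one_le_of_torsionOf_le hx huw hxw

end RegularSequence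

theorem IsCMQuot.ringKrullDim_le_colon {K σ : Type*} [Field K] [Finite σ]
    {J : Ideal (MvPolynomial σ K)} (hJ : IsCMQuot J) {f : MvPolynomial σ K}
    (hf : J.colon {f} ≤ RingHom.ker (constantCoeff (σ := σ) (R := K))) :
    ringKrullDim (MvPolynomial σ K ⧸ J) ≤ ringKrullDim (MvPolynomial σ K ⧸ J.colon {f}) := by
  obtain ⟨rs, hrs, regular, length_eq⟩ := hJ
  have : (RingHom.ker (constantCoeff (σ := σ) (R := K))).IsPrime := RingHom.ker_isPrime _
  have vars_le : Ideal.span (Set.range X) ≤ RingHom.ker (constantCoeff (σ := σ) (R := K)) :=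
    Ideal.span_le.2 (Set.range_subset_iff.2 fun i ↦ constantCoeff_X K i)
  have colon_eq : J.colon {f} = Ideal.torsionOf _ _ (Ideal.Quotient.mk J f) := by
    ext a
    rw [Submodule.mem_colon_singleton, Ideal.mem_torsionOf_iff, ← Ideal.Quotient.eq_zero_iff_mem]
    rfl
  rw [colon_eq] at hf ⊢
  rw [← length_eq]
  exact length_le_ringKrullDim_quotient_torsionOf regular.toIsWeaklyRegular
    (fun r hr ↦ vars_le (hrs r hr)) hf

section Dimension

variable {R σ : Type*} [CommRing R]

theorem ringKrullDim_quotient_anti {I J : Ideal R} (h : I ≤ J) :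
    ringKrullDim (R ⧸ J) ≤ ringKrullDim (R ⧸ I) :=
  ringKrullDim_le_of_surjective (Ideal.Quotient.factor h) (Ideal.Quotient.factor_surjective h)

theorem ringKrullDim_quotient_radical (J : Ideal R) :
    ringKrullDim (R ⧸ J.radical) = ringKrullDim (R ⧸ J) := by
  rw [ringKrullDim_quotient, ringKrullDim_quotient, PrimeSpectrum.zeroLocus_radical]

theorem ker_killCompl_val_compl (s : Set σ) :
    RingHom.ker (killCompl (R := R) (Subtype.val_injective (p := (· ∈ sᶜ)))) =
      Ideal.span (X '' s) := by
  ext f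
  rw [RingHom.mem_ker, mem_ideal_span_X_image, MvPolynomial.ext_iff]
  simp only [coeff_killCompl, coeff_zero]
  refine ⟨fun h d hd ↦ ?_, fun h e ↦ ?_⟩
  · by_contra! hds
    have support_subset : (d.support : Set σ) ⊆ Set.range (Subtype.val : ↥sᶜ → σ) :=
      fun i hi ↦ ⟨⟨i, fun his ↦ Finsupp.mem_support_iff.1 hi (hds i his)⟩, rfl⟩
    rw [← Finsupp.mapDomain_comapDomain _ Subtype.val_injective d support_subset] at hd
    exact mem_support_iff.1 hd (h _)
  · by_contra he
    obtain ⟨i, his, hi⟩ := h _ (mem_support_iff.2 he)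
    exact hi (Finsupp.mapDomain_of_notMem_range e i (by simpa using his))

theorem ringKrullDim_quotient_span_X_image [IsNoetherianRing R] [Finite σ] (s : Set σ) :
    ringKrullDim (MvPolynomial σ R ⧸ Ideal.span (X '' s : Set (MvPolynomial σ R))) =
      ringKrullDim R + Nat.card ↥sᶜ := by
  have surjective : Function.Surjective
      (killCompl (R := R) (Subtype.val_injective (p := (· ∈ sᶜ)))) :=
    fun f ↦ ⟨_, killCompl_rename_app _ f⟩
  rw [← ker_killCompl_val_compl, ← ringKrullDim_of_isNoetherianRing]
  exact ringKrullDim_eq_of_ringEquiv (Ideal.quotientKerAlgEquivOfSurjective surjective).toRingEquiv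

end Dimension

section Monomial

open scoped Pointwise in
theorem span_range_monomial_pow {R σ ι : Type*} [CommSemiring R] (g : ι → σ →₀ ℕ) (n : ℕ) :
    Ideal.span (Set.range fun i ↦ monomial (g i) (1 : R)) ^ n =
      Ideal.span ((fun d ↦ monomial d (1 : R)) ''
        ((fun e : ι →₀ ℕ ↦ e.sum fun i a ↦ a • g i) '' {e | e.degree = n})) := by
  rw [Ideal.span, Ideal.span, Submodule.span_pow, ← Set.image_univ,
    Finsupp.image_pow_eq_finsuppProd_image]
  simp [Set.image_image, monomial_finsupp_sum_index, monomial_pow]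

theorem monomial_mem_span_range_monomial_pow_iff {R σ ι : Type*} [CommSemiring R] [Nontrivial R]
    [Fintype ι] {g : ι → σ →₀ ℕ} {n : ℕ} {u : σ →₀ ℕ} :
    monomial u (1 : R) ∈ Ideal.span (Set.range fun i ↦ monomial (g i) (1 : R)) ^ n ↔
      ∃ e : ι → ℕ, ∑ i, e i = n ∧ ∑ i, e i • g i ≤ u := by
  classical
  rw [span_range_monomial_pow, mem_ideal_span_monomial_image, support_monomial, if_neg one_ne_zero]
  simp [Finsupp.equivFunOnFinite.symm.exists_congr_left, Finsupp.sum_fintype, Finsupp.degree_eq_sum]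

theorem colon_monomial_le_ker_constantCoeff {R σ : Type*} [CommRing R] {T : Set (σ →₀ ℕ)}
    {u : σ →₀ ℕ} (hu : monomial u (1 : R) ∉ Ideal.span ((fun d ↦ monomial d (1 : R)) '' T)) :
    (Ideal.span ((fun d ↦ monomial d (1 : R)) '' T)).colon {monomial u 1} ≤
      RingHom.ker constantCoeff := by
  classical
  intro f hf
  rw [Submodule.mem_colon_singleton, smul_eq_mul, mem_ideal_span_monomial_image] at hf
  contrapose! hu
  rw [mem_ideal_span_monomial_image]
  intro d hd
  obtain rfl := Finset.mem_singleton.1 (support_monomial_subset hd)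
  apply hf
  simpa [coeff_mul_monomial', ← constantCoeff_eq] using hu

theorem IsCMQuot.card_le_card_of_monomial_mem {K σ : Type*} [Field K] [Finite σ]
    {J : Ideal (MvPolynomial σ K)} (hJ : IsCMQuot J) {T : Set (σ →₀ ℕ)}
    (hT : J = Ideal.span ((fun d ↦ monomial d (1 : K)) '' T)) {C S : Finset σ}
    (hC : J ≤ Ideal.span (X '' (C : Set σ))) {u : σ →₀ ℕ} (hu : monomial u 1 ∉ J)
    (hS : ∀ i ∈ S, ∃ N, monomial (u + Finsupp.single i N) 1 ∈ J) : S.card ≤ C.card := by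
  have span_le_radical :
      Ideal.span (X '' (S : Set σ)) ≤ (J.colon {monomial u (1 : K)}).radical := by
    rw [Ideal.span_le]
    rintro _ ⟨i, hi, rfl⟩
    obtain ⟨N, hN⟩ := hS i hi
    refine ⟨N, Submodule.mem_colon_singleton.2 ?_⟩
    rwa [smul_eq_mul, X_pow_eq_monomial, monomial_mul, one_mul, add_comm]
  have dim_le := calc
    ringKrullDim (MvPolynomial σ K ⧸ Ideal.span (X '' (C : Set σ) : Set (MvPolynomial σ K)))
      ≤ ringKrullDim (MvPolynomial σ K ⧸ J) := ringKrullDim_quotient_anti hC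
    _ ≤ ringKrullDim (MvPolynomial σ K ⧸ J.colon {monomial u (1 : K)}) :=
      hJ.ringKrullDim_le_colon (hT ▸ colon_monomial_le_ker_constantCoeff (hT ▸ hu))
    _ = ringKrullDim (MvPolynomial σ K ⧸ (J.colon {monomial u (1 : K)}).radical) :=
      (ringKrullDim_quotient_radical _).symm
    _ ≤ ringKrullDim (MvPolynomial σ K ⧸ Ideal.span (X '' (S : Set σ) : Set (MvPolynomial σ K))) :=
      ringKrullDim_quotient_anti span_le_radical
  simp only [ringKrullDim_quotient_span_X_image, ringKrullDim_eq_zero_of_field, zero_add,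
    Nat.cast_le, Nat.card_coe_set_eq] at dim_le
  have card_C := Set.ncard_add_ncard_compl (C : Set σ)
  have card_S := Set.ncard_add_ncard_compl (S : Set σ)
  rw [Set.ncard_coe_finset] at card_C card_S
  omega

end Monomial

section Tree

/-- The exponent vectors of the five generators of the weighted edge ideal, in the order of the
edges `ab, bc, ax, by, cz`, with the vertices `a, b, c, x, y, z` numbered `0, …, 5`. -/
noncomputable def treeEdgeExponent (k m p q r : ℕ) : Fin 5 → Fin 6 →₀ ℕ :=
  ![.single 0 k + .single 1 k, .single 1 m + .single 2 m, .single 0 p + .single 3 p,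
    .single 1 q + .single 4 q, .single 2 r + .single 5 r]

/-- The weighted edge ideal of the tree with edges `ab, bc, ax, by, cz` of weights
`k, m, p, q, r`, where `a, b, c, x, y, z` are the variables `X 0, …, X 5`. -/
noncomputable def treeEdgeIdeal (K : Type*) [Field K] (k m p q r : ℕ) :
    Ideal (MvPolynomial (Fin 6) K) :=
  Ideal.span {(X 0) ^ k * (X 1) ^ k, (X 1) ^ m * (X 2) ^ m,
    (X 0) ^ p * (X 3) ^ p, (X 1) ^ q * (X 4) ^ q, (X 2) ^ r * (X 5) ^ r}

variable {K : Type*} [Field K] {k d m p q r n s : ℕ}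

theorem treeEdgeIdeal_eq_span_range_monomial :
    treeEdgeIdeal K k m p q r =
      Ideal.span (Set.range fun i ↦ monomial (treeEdgeExponent k m p q r i) (1 : K)) := by
  simp only [treeEdgeIdeal, treeEdgeExponent, X_pow_eq_monomial, monomial_mul, one_mul]
  simp [Set.range, Fin.exists_fin_succ, Set.insert_def, eq_comm]

theorem monomial_mem_treeEdgeIdeal_pow_iff {u : Fin 6 →₀ ℕ} :
    monomial u 1 ∈ treeEdgeIdeal K k m p q r ^ n ↔
      ∃ e₁ e₂ e₃ e₄ e₅ : ℕ, e₁ + e₂ + e₃ + e₄ + e₅ = n ∧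
        k * e₁ + p * e₃ ≤ u 0 ∧ k * e₁ + m * e₂ + q * e₄ ≤ u 1 ∧ m * e₂ + r * e₅ ≤ u 2 ∧
        p * e₃ ≤ u 3 ∧ q * e₄ ≤ u 4 ∧ r * e₅ ≤ u 5 := by
  rw [treeEdgeIdeal_eq_span_range_monomial, monomial_mem_span_range_monomial_pow_iff]
  simp only [Fin.exists_fin_succ_pi, Fin.exists_fin_zero_pi, Fin.sum_univ_five,
    Finsupp.le_def, Fin.forall_fin_succ, treeEdgeExponent]
  simp [mul_comm, add_assoc]

theorem treeEdgeIdeal_le_span_X (hk : k ≠ 0) (hm : m ≠ 0) (hp : p ≠ 0) (hq : q ≠ 0) (hr : r ≠ 0) :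
    treeEdgeIdeal K k m p q r ≤ Ideal.span (X '' {0, 1, 2}) := by
  have X_pow_mem {i : Fin 6} (hi : i ∈ ({0, 1, 2} : Set (Fin 6))) {w : ℕ} (hw : w ≠ 0) :
      (X i : MvPolynomial (Fin 6) K) ^ w ∈ Ideal.span (X '' {0, 1, 2}) :=
    Ideal.pow_mem_of_mem _ (Ideal.subset_span (Set.mem_image_of_mem X hi)) w
      (Nat.pos_of_ne_zero hw)
  rw [treeEdgeIdeal, Ideal.span_le]
  rintro _ (rfl | rfl | rfl | rfl | rfl) <;>
    exact Ideal.mul_mem_right _ _ (X_pow_mem (by simp) ‹_›)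

theorem card_le_three_of_isCMQuot_treeEdgeIdeal_pow
    (hk : k ≠ 0) (hm : m ≠ 0) (hp : p ≠ 0) (hq : q ≠ 0) (hr : r ≠ 0) (hn : n ≠ 0)
    (hCM : IsCMQuot (treeEdgeIdeal K k m p q r ^ n)) {u : Fin 6 →₀ ℕ}
    (hu : monomial u 1 ∉ treeEdgeIdeal K k m p q r ^ n) {S : Finset (Fin 6)}
    (hS : ∀ i ∈ S, ∃ N, monomial (u + Finsupp.single i N) 1 ∈ treeEdgeIdeal K k m p q r ^ n) :
    S.card ≤ 3 := by
  have pow_eq := span_range_monomial_pow (R := K) (treeEdgeExponent k m p q r) n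
  have pow_le := (Ideal.pow_le_self hn).trans (treeEdgeIdeal_le_span_X (K := K) hk hm hp hq hr)
  rw [← treeEdgeIdeal_eq_span_range_monomial] at pow_eq
  exact hCM.card_le_card_of_monomial_mem pow_eq (C := {0, 1, 2}) (by simpa using pow_le) hu hS

theorem mul_le_weight_ax_of_isCMQuot_treeEdgeIdeal_pow (hp : p ≠ 0) (hq : q ≠ 0) (hr : r ≠ 0)
    (hsk : s * d < k) (hks : k ≤ (s + 1) * d)
    (hCM : IsCMQuot (treeEdgeIdeal K k (k + d) p q r ^ (s + 2))) : k * (s + 2) ≤ p := by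
  by_contra! hp_lt
  let u : Fin 6 →₀ ℕ := Finsupp.equivFunOnFinite.symm
    ![p, (k + d) * (s + 1), (k + d) * (s + 2) + r, 0, 0, 0]
  suffices ({0, 1, 3, 5} : Finset (Fin 6)).card ≤ 3 from absurd this (by decide)
  refine card_le_three_of_isCMQuot_treeEdgeIdeal_pow (by omega) (by omega) hp hq hr (by omega)
    hCM (u := u) ?_ ?_
  · rw [monomial_mem_treeEdgeIdeal_pow_iff]
    rintro ⟨e₁, e₂, e₃, e₄, e₅, he, ha, hb, -, hx, hy, hz⟩
    obtain rfl : e₃ = 0 := by simpa [u, hp] using hx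
    obtain rfl : e₄ = 0 := by simpa [u, hq] using hy
    obtain rfl : e₅ = 0 := by simpa [u, hr] using hz
    simp only [u, Finsupp.equivFunOnFinite_symm_apply_apply, Matrix.cons_val] at ha hb
    have he₁_lt : e₁ < s + 2 := Nat.lt_of_mul_lt_mul_left (a := k) (by omega)
    have he₁_ge : k + d ≤ d * e₁ := by
      have : (k + d) * (e₁ + e₂) = (k + d) * (s + 2) := by rw [← he]; rfl
      linarith
    nlinarith
  · simp only [Finset.forall_mem_insert, Finset.mem_singleton, forall_eq,
      monomial_mem_treeEdgeIdeal_pow_iff]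
    refine ⟨⟨k * (s + 2), s + 2, 0, 0, 0, 0, ?_⟩, ⟨(k + d) * (s + 2), 0, s + 2, 0, 0, 0, ?_⟩,
      ⟨p, 0, s + 1, 1, 0, 0, ?_⟩, ⟨r, 0, s + 1, 0, 0, 1, ?_⟩⟩ <;>
      simp only [u, Finsupp.add_apply, Finsupp.single_apply, Fin.reduceEq, reduceIte,
        Finsupp.equivFunOnFinite_symm_apply_apply, Matrix.cons_val] <;>
      grind

theorem mul_le_weight_cz_of_isCMQuot_treeEdgeIdeal_pow (hp : p ≠ 0) (hq : q ≠ 0) (hr : r ≠ 0)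
    (hsk : s * d < k) (hkp : k * (s + 1) ≤ p)
    (hCM : IsCMQuot (treeEdgeIdeal K k (k + d) p q r ^ (s + 1))) : (k + d) * s ≤ r := by
  by_contra! hr_lt
  let u : Fin 6 →₀ ℕ := Finsupp.equivFunOnFinite.symm ![p, (k + d) * s, r, p * (s + 1), 0, 0]
  suffices ({0, 1, 2, 5} : Finset (Fin 6)).card ≤ 3 from absurd this (by decide)
  refine card_le_three_of_isCMQuot_treeEdgeIdeal_pow (by omega) (by omega) hp hq hr (by omega)
    hCM (u := u) ?_ ?_
  · rw [monomial_mem_treeEdgeIdeal_pow_iff]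
    rintro ⟨e₁, e₂, e₃, e₄, e₅, he, ha, hb, hc, -, hy, hz⟩
    obtain rfl : e₄ = 0 := by simpa [u, hq] using hy
    obtain rfl : e₅ = 0 := by simpa [u, hr] using hz
    simp only [u, Finsupp.equivFunOnFinite_symm_apply_apply, Matrix.cons_val] at ha hb hc
    have he₃ : e₃ ≤ 1 :=
      Nat.le_of_mul_le_mul_left (by omega : p * e₃ ≤ p * 1) (Nat.pos_of_ne_zero hp)
    obtain rfl | rfl : e₃ = 0 ∨ e₃ = 1 := by omega
    · have : k + d * e₂ ≤ s * d := by
        have : k * (e₁ + e₂) = k * (s + 1) := by rw [← he]; rfl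
        linarith
      omega
    · obtain rfl : e₁ = 0 := by simpa [show k ≠ 0 by omega] using ha
      obtain rfl : e₂ = s := by omega
      omega
  · simp only [Finset.forall_mem_insert, Finset.mem_singleton, forall_eq,
      monomial_mem_treeEdgeIdeal_pow_iff]
    refine ⟨⟨p * (s + 1), 0, 0, s + 1, 0, 0, ?_⟩, ⟨k * (s + 1), s + 1, 0, 0, 0, 0, ?_⟩,
      ⟨(k + d) * s, 0, s, 1, 0, 0, ?_⟩, ⟨r, s, 0, 0, 0, 1, ?_⟩⟩ <;>
      simp only [u, Finsupp.add_apply, Finsupp.single_apply, Fin.reduceEq, reduceIte,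
        Finsupp.equivFunOnFinite_symm_apply_apply, Matrix.cons_val] <;>
      grind

end Tree

theorem exists_ceilDiv_sub_eq_add_two {k m : ℕ} (hk : 0 < k) (hkm : k < m) :
    ∃ s, m ⌈/⌉ (m - k) = s + 2 ∧ s * (m - k) < k ∧ k ≤ (s + 1) * (m - k) := by
  obtain ⟨d, rfl⟩ := Nat.exists_eq_add_of_le hkm.le
  have hd : 0 < d := by omega
  rw [Nat.add_sub_cancel_left]
  refine ⟨(k - 1) / d, ?_, ?_, ?_⟩
  · rw [Nat.ceilDiv_eq_add_pred_div, show k + d + d - 1 = k - 1 + 2 * d by omega,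
      Nat.add_mul_div_right _ _ hd]
  · have := Nat.div_mul_le_self (k - 1) d
    omega
  · have : k - 1 < ((k - 1) / d + 1) * d := Nat.lt_mul_of_div_lt (Nat.lt_succ_self _) hd
    omega

theorem r_lower_bound_of_cm_general {K : Type*} [Field K] {k m p q r : ℕ}
    (hk : 0 < k) (hkm : k < m) (hp : 0 < p) (hq : 0 < q) (hr : 0 < r)
    (hCM_pred : IsCMQuot (treeEdgeIdeal K k m p q r ^ (m ⌈/⌉ (m - k) - 1)))
    (hCM : IsCMQuot (treeEdgeIdeal K k m p q r ^ (m ⌈/⌉ (m - k)))) :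
    m * (m ⌈/⌉ (m - k) - 2) ≤ r := by
  obtain ⟨s, ht, hsk, hks⟩ := exists_ceilDiv_sub_eq_add_two hk hkm
  rw [ht] at hCM_pred hCM ⊢
  obtain ⟨d, rfl⟩ := Nat.exists_eq_add_of_le hkm.le
  rw [Nat.add_sub_cancel_left] at hsk hks
  have hkp : k * (s + 2) ≤ p :=
    mul_le_weight_ax_of_isCMQuot_treeEdgeIdeal_pow hp.ne' hq.ne' hr.ne' hsk hks hCM
  exact mul_le_weight_cz_of_isCMQuot_treeEdgeIdeal_pow hp.ne' hq.ne' hr.ne' hsk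
    ((Nat.mul_le_mul_left k (Nat.le_succ (s + 1))).trans hkp) hCM_pred

/-- For the weighted edge ideal `I = (a^k b^k, b^m c^m, a^p x^p, b^q y^q, c^r z^r)` of the
tree with edges `{ab, bc, ax, by, cz}` in `R = K[a,b,c,x,y,z]` (here `a = X 0`, `b = X 1`,
`c = X 2`, `x = X 3`, `y = X 4`, `z = X 5`) with `k < m`: if `R/I^n` is Cohen–Macaulay
for all `n ≥ 1`, then `r ≥ m·(⌈m/(m−k)⌉ − 2)` (with `⌈m/(m−k)⌉ = (m + (m−k) − 1)/(m−k)`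
the ceiling of `m/(m−k)`). -/
theorem r_lower_bound_of_cm {K : Type*} [Field K] (k m p q r : ℕ)
    (hk : 0 < k) (hkm : k < m) (hp : 0 < p) (hq : 0 < q) (hr : 0 < r)
    (hCM : ∀ n : ℕ, 1 ≤ n →
      IsCMQuot ((Ideal.span ({(X 0) ^ k * (X 1) ^ k, (X 1) ^ m * (X 2) ^ m,
          (X 0) ^ p * (X 3) ^ p, (X 1) ^ q * (X 4) ^ q, (X 2) ^ r * (X 5) ^ r} :
          Set (MvPolynomial (Fin 6) K))) ^ n)) :
    m * ((m + (m - k) - 1) / (m - k) - 2) ≤ r := by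
  obtain ⟨s, ht, -⟩ := exists_ceilDiv_sub_eq_add_two hk hkm
  exact r_lower_bound_of_cm_general hk hkm hp hq hr (hCM _ (by omega)) (hCM _ (by omega))
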